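/- Let F_n be the free group of finite rank n with ordered free basis (x_1, …, x_n) and set F_i = ⟨x_1, …, x_i⟩. A subgroup H ≤ F_n is in echelon form with respect to (x_1, …, x_n) if and only if H has a free ordered basis {y_{i_1}, …, y_{i_r}} with y_{i_j} ∈ F_{i_j} − F_{i_j − 1} for indices 1 ≤ i_1 < i_2 < ⋯ < i_r ≤ n. -/

import Mathlib

/-- The rank of a subgroup: the minimal cardinality of a generating set.
For subgroups of free groups (which are free by Nielsen–Schreier) this is the
cardinality of a free basis. -/
noncomputable def rk {G : Type*} [Group G] (H : Subgroup G) : Cardinal :=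
  ⨅ S : {S : Set G // Subgroup.closure S = H}, Cardinal.mk S.1

/-- A subgroup `H` is inert if `rk (H ⊓ K) ≤ rk K` for every finitely generated `K`. -/
def IsInert {G : Type*} [Group G] (H : Subgroup G) : Prop :=
  ∀ K : Subgroup G, K.FG → rk (H ⊓ K) ≤ rk K

/-- `stage x i` is the subgroup generated by the first `i` elements of `x`. -/
def stage {n : ℕ} {F : Type*} [Group F] (x : Fin n → F) (i : ℕ) : Subgroup F :=
  Subgroup.closure (x '' {j | (j : ℕ) < i})

/-- `x` is an ordered free basis of `F`. -/
def IsOrderedBasis {n : ℕ} {F : Type*} [Group F] (x : Fin n → F) : Prop :=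
  Function.Bijective (FreeGroup.lift x)

/-- `H` is in echelon form with respect to the ordered basis `x`:
`rk (H ⊓ F_i) ≤ rk (H ⊓ F_{i-1}) + 1` for `i = 1, …, n`. -/
def InEchelonForm {n : ℕ} {F : Type*} [Group F] (x : Fin n → F) (H : Subgroup F) : Prop :=
  ∀ i : ℕ, i < n → rk (H ⊓ stage x (i + 1)) ≤ rk (H ⊓ stage x i) + 1

/-- `H` is an echelon subgroup: it is in echelon form with respect to
some ordered free basis. -/
def IsEchelon {n : ℕ} (H : Subgroup (FreeGroup (Fin n))) : Prop :=
  ∃ x : Fin n → FreeGroup (Fin n), IsOrderedBasis x ∧ InEchelonForm x H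

/-- A 1-generator (subgroup) endomorphism: an endomorphism fixing all but (possibly)
one member of some set of free generators. -/
def IsOneGenEndo {G : Type*} [Group G] (φ : G →* G) : Prop :=
  ∃ (ι : Type) (b : FreeGroupBasis ι G) (s : Set ι),
    s.Subsingleton ∧ ∀ i ∉ s, φ (b i) = b i

/-- The subgroup of points fixed by an endomorphism. -/
def fixedSubgroup {G : Type*} [Group G] (φ : G →* G) : Subgroup G where
  carrier := {g | φ g = g}
  one_mem' := by simp
  mul_mem' := by intro a b ha hb; simp only [Set.mem_setOf_eq, map_mul] at *; rw [ha, hb]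
  inv_mem' := by intro a ha; simp only [Set.mem_setOf_eq, map_inv] at *; rw [ha]

/-- An element is primitive if it belongs to some free basis. -/
def IsPrimitive {n : ℕ} (g : FreeGroup (Fin n)) : Prop :=
  ∃ x : Fin n → FreeGroup (Fin n), IsOrderedBasis x ∧ ∃ j, x j = g

/-!
A Schreier transversal for `H` whose words use letters as small as possible is compatible with the
whole flag `F_0 ≤ F_1 ≤ ⋯ ≤ F_n`: the resulting free basis `B` of `H` has the property that
`B ∩ F_i` is a free basis of `H ∩ F_i` for every `i`. Hence the rank of `H ∩ F_{i+1}` exceeds that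
of `H ∩ F_i` by the number of elements of `B` in the layer `F_{i+1} ∖ F_i`, and `H` is in echelon
form iff no layer contains two elements of `B`. In that case `B`, ordered by layers, is the
required basis. Conversely, let `y_1, …, y_r` be a basis of `H` with elements in distinct layers.
A layer that meets `H` meets `B`, so `B` meets at least `r` layers; since `B` has only `r`
elements, they lie in distinct layers.
-/

open Cardinal

universe u

section FreeFamily

variable {ι κ G K : Type*} [Group G] [Group K]

/-- A family of elements of a group is *free* if it freely generates the subgroup it generates:
no nontrivial reduced word in the family is trivial. It plays for free groups the role of
`LinearIndependent`; a subset `B` of the group is free if the family `((↑) : B → G)` is. -/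
def IsFreeFamily (v : ι → G) : Prop :=
  Function.Injective (FreeGroup.lift v)

lemma IsFreeFamily.comp {v : ι → G} (hv : IsFreeFamily v) {f : κ → ι}
    (hf : Function.Injective f) : IsFreeFamily (v ∘ f) := by
  have : FreeGroup.lift (v ∘ f) = (FreeGroup.lift v).comp (FreeGroup.map f) := by ext; simp
  rw [IsFreeFamily, this]
  exact (show Function.Injective (FreeGroup.lift v) from hv).comp (FreeGroup.map_injective hf)

lemma IsFreeFamily.map {v : ι → G} (hv : IsFreeFamily v) {φ : G →* K}
    (hφ : Function.Injective φ) : IsFreeFamily (φ ∘ v) := by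
  have : FreeGroup.lift (φ ∘ v) = φ.comp (FreeGroup.lift v) := by ext; simp
  rw [IsFreeFamily, this]
  exact hφ.comp hv

lemma IsFreeFamily.injective {v : ι → G} (hv : IsFreeFamily v) : Function.Injective v :=
  fun i j h => FreeGroup.of_injective <| hv <| by simpa using h

lemma IsFreeFamily.ne_one {v : ι → G} (hv : IsFreeFamily v) (i : ι) : v i ≠ 1 :=
  fun h => FreeGroup.of_ne_one i <| hv <| by simpa using h

lemma IsFreeFamily.coe_range {v : ι → G} (hv : IsFreeFamily v) :
    IsFreeFamily ((↑) : Set.range v → G) := by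
  have : ((↑) : Set.range v → G) = v ∘ (Equiv.ofInjective v hv.injective).symm :=
    funext fun g => (Equiv.apply_ofInjective_symm hv.injective g).symm
  rw [this]
  exact hv.comp (Equiv.injective _)

lemma IsFreeFamily.coe_image {B : Set G} (hB : IsFreeFamily ((↑) : B → G)) {φ : G →* K}
    (hφ : Function.Injective φ) : IsFreeFamily ((↑) : φ '' B → K) := by
  have := (hB.map hφ).coe_range
  rwa [Set.range_comp, Subtype.range_coe] at this

lemma IsFreeFamily.mono {B C : Set G} (hC : IsFreeFamily ((↑) : C → G)) (h : B ⊆ C) :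
    IsFreeFamily ((↑) : B → G) :=
  hC.comp (Set.inclusion_injective h)

end FreeFamily

section Rank

/-- The images of the generators span the free abelian group on `ι`, which has rank `#ι`. -/
lemma mk_le_mk_of_closure_eq_top {ι : Type u} {S : Set (FreeGroup ι)}
    (hS : Subgroup.closure S = ⊤) : #ι ≤ #S := by
  let ψ : FreeGroup ι →* Multiplicative (ι →₀ ℤ) :=
    FreeGroup.lift fun i => Multiplicative.ofAdd (Finsupp.single i 1)
  let T : Set (ι →₀ ℤ) := (fun g => (ψ g).toAdd) '' S
  have mem_span (g : FreeGroup ι) : (ψ g).toAdd ∈ Submodule.span ℤ T := by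
    have : Subgroup.closure S ≤
        (AddSubgroup.toSubgroup (Submodule.span ℤ T).toAddSubgroup).comap ψ :=
      (Subgroup.closure_le _).2 fun g hg => Submodule.subset_span ⟨g, hg, rfl⟩
    exact this (hS ▸ Subgroup.mem_top g)
  have span_eq_top : Submodule.span ℤ T = ⊤ := by
    rw [eq_top_iff, ← Finsupp.basisSingleOne.span_eq, Submodule.span_le]
    rintro _ ⟨i, rfl⟩
    simpa [ψ] using mem_span (FreeGroup.of i)
  calc #ι = Module.rank ℤ (ι →₀ ℤ) := Finsupp.basisSingleOne.mk_eq_rank''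
    _ = Module.rank ℤ (Submodule.span ℤ T) := by rw [span_eq_top, rank_top]
    _ ≤ #T := rank_span_le T
    _ ≤ #S := mk_image_le

variable {G : Type u} [Group G]

lemma IsFreeFamily.mk_le_of_closure_eq {B S : Set G} (hB : IsFreeFamily ((↑) : B → G))
    (hS : Subgroup.closure S = Subgroup.closure B) : #B ≤ #S := by
  let φ := FreeGroup.lift ((↑) : B → G)
  have range_φ : φ.range = Subgroup.closure B := by
    rw [FreeGroup.range_lift_eq_closure, Subtype.range_coe]
  have image_preimage : φ '' (φ ⁻¹' S) = S := by
    rw [Set.image_preimage_eq_iff, ← MonoidHom.coe_range, range_φ, ← hS]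
    exact Subgroup.subset_closure
  have closure_eq_top : Subgroup.closure (φ ⁻¹' S) = ⊤ := by
    apply Subgroup.map_injective hB
    rw [MonoidHom.map_closure, ← MonoidHom.range_eq_map]
    exact (congrArg _ image_preimage).trans (hS.trans range_φ.symm)
  calc #B ≤ #(φ ⁻¹' S) := mk_le_mk_of_closure_eq_top closure_eq_top
    _ = #(φ '' (φ ⁻¹' S)) := (mk_image_eq hB).symm
    _ = #S := by rw [image_preimage]

lemma rk_closure_le (S : Set G) : rk (Subgroup.closure S) ≤ #S :=
  ciInf_le' (fun T : {T : Set G // Subgroup.closure T = Subgroup.closure S} => #T.1) ⟨S, rfl⟩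

lemma IsFreeFamily.rk_closure {B : Set G} (hB : IsFreeFamily ((↑) : B → G)) :
    rk (Subgroup.closure B) = #B := by
  have : Nonempty {S : Set G // Subgroup.closure S = Subgroup.closure B} := ⟨⟨B, rfl⟩⟩
  exact (rk_closure_le B).antisymm (le_ciInf fun S => hB.mk_le_of_closure_eq S.2)

end Rank

section SchreierGenerators

variable {G V : Type*} [Group G] [MulAction G V]

/-- The Schreier generator attached to `g : G` and `v : V`, where `t v` is to be thought of as a
group element carrying a base point to `v`: the loop that goes from the base point to `v` along
`t v`, then to `g • v` along `g`, and back along `t (g • v)`. -/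
def schreierGen (t : V → G) (g : G) (v : V) : G :=
  (t (g • v))⁻¹ * (g * t v)

lemma schreierGen_mul (t : V → G) (g h : G) (v : V) :
    schreierGen t (g * h) v = schreierGen t g (h • v) * schreierGen t h v := by
  simp only [schreierGen, mul_smul]
  group

lemma schreierGen_inv (t : V → G) (g : G) (v : V) :
    schreierGen t g⁻¹ v = (schreierGen t g (g⁻¹ • v))⁻¹ := by
  simp only [schreierGen, smul_inv_smul]
  group

lemma schreierGen_eq_one_iff {t : V → G} {g : G} {v : V} :
    schreierGen t g v = 1 ↔ t (g • v) = g * t v := by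
  rw [schreierGen, inv_mul_eq_one]

lemma schreierGen_mem_stabilizer {t : V → G} {v₀ : V} (ht : ∀ v, t v • v₀ = v) (g : G) (v : V) :
    schreierGen t g v ∈ MulAction.stabilizer G v₀ := by
  rw [MulAction.mem_stabilizer_iff, schreierGen, mul_smul, mul_smul, ht, inv_smul_eq_iff, ht]

lemma schreierGen_mem_of_mem_closure {t : V → G} {S : Set G} {v₀ : V} {C : Subgroup G}
    (h : ∀ g ∈ S, ∀ v ∈ MulAction.orbit (Subgroup.closure S) v₀, schreierGen t g v ∈ C)
    {g : G} (hg : g ∈ Subgroup.closure S) :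
    ∀ v ∈ MulAction.orbit (Subgroup.closure S) v₀, schreierGen t g v ∈ C := by
  have smul_mem {a : G} (ha : a ∈ Subgroup.closure S) {v : V}
      (hv : v ∈ MulAction.orbit (Subgroup.closure S) v₀) :
      a • v ∈ MulAction.orbit (Subgroup.closure S) v₀ :=
    MulAction.mem_orbit_of_mem_orbit (⟨a, ha⟩ : Subgroup.closure S) hv
  induction hg using Subgroup.closure_induction with
  | mem g hg => exact h g hg
  | one => exact fun v _ => by simp [schreierGen]
  | mul g k _ hk ihg ihk =>
    intro v hv
    rw [schreierGen_mul]
    exact mul_mem (ihg _ (smul_mem hk hv)) (ihk v hv)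
  | inv g hg ih =>
    intro v hv
    rw [schreierGen_inv]
    exact inv_mem (ih _ (smul_mem (inv_mem hg) hv))

end SchreierGenerators

section Words

variable {ι : Type*}

lemma mk_mem_closure_of_image {Y : Set ι} {w : List (ι × Bool)} (hw : ∀ l ∈ w, l.1 ∈ Y) :
    FreeGroup.mk w ∈ Subgroup.closure (FreeGroup.of '' Y) := by
  rw [← MonoidHom.id_apply (FreeGroup ι) (FreeGroup.mk w), ← FreeGroup.lift_of_eq_id,
    FreeGroup.lift_mk]
  refine Subgroup.list_prod_mem _ fun g hg => ?_
  obtain ⟨⟨i, b⟩, hl, rfl⟩ := List.mem_map.1 hg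
  have hi := Subgroup.subset_closure (Set.mem_image_of_mem FreeGroup.of (hw _ hl))
  cases b
  · exact inv_mem hi
  · exact hi

lemma exists_mk_eq_of_mem_closure_of_image {Y : Set ι} {g : FreeGroup ι}
    (hg : g ∈ Subgroup.closure (FreeGroup.of '' Y)) :
    ∃ w : List (ι × Bool), (∀ l ∈ w, l.1 ∈ Y) ∧ FreeGroup.mk w = g := by
  rw [Set.image_eq_range, ← FreeGroup.range_lift_eq_closure] at hg
  obtain ⟨⟨w⟩, rfl⟩ := hg
  refine ⟨w.map fun l => (l.1, l.2), fun l hl => ?_, ?_⟩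
  · obtain ⟨m, -, rfl⟩ := List.mem_map.1 hl
    exact m.1.2
  · exact FreeGroup.map.mk.symm.trans (DFunLike.congr_fun FreeGroup.map_eq_lift _)

end Words

section SchreierTransversal

variable {ι V : Type*} [MulAction (FreeGroup ι) V]

lemma mk_cons_smul (l : ι × Bool) (w : List (ι × Bool)) (v : V) :
    FreeGroup.mk (l :: w) • v = FreeGroup.mk [l] • FreeGroup.mk w • v := by
  rw [smul_smul, FreeGroup.mul_mk, List.singleton_append]

lemma exists_mk_smul_eq [MulAction.IsPretransitive (FreeGroup ι) V] (v₀ v : V) :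
    ∃ w : List (ι × Bool), FreeGroup.mk w • v₀ = v := by
  obtain ⟨⟨w⟩, hw⟩ := MulAction.exists_smul_eq (FreeGroup ι) v₀ v
  exact ⟨w, hw⟩

/-- A Schreier transversal for an action of a free group: a word `t v` carrying the base point `v₀`
to `v` is chosen for every `v`, so that suffixes of chosen words are chosen. (Words act from the
left, so it is suffixes and not prefixes that trace the path from `v₀` to `v`.) Moreover the chosen
word uses no letter larger than all letters of some other word leading to the same point; this
makes the transversal compatible with all the subgroups generated by initial segments of `ι`. -/
structure IsSchreierTransversal [LE ι] (v₀ : V) (t : V → List (ι × Bool)) : Prop where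
  mk_smul : ∀ v, FreeGroup.mk (t v) • v₀ = v
  suffix_closed : ∀ {v u}, u <:+ t v → t (FreeGroup.mk u • v₀) = u
  exists_letter_le : ∀ w, ∀ l ∈ t (FreeGroup.mk w • v₀), ∃ m ∈ w, l.1 ≤ m.1

section Existence

variable [LinearOrder ι]

/-- The cost minimised by the words of the Schreier transversal `schreierWord`: the largest letter
first (`⊥` for the empty word), then the length. -/
def wordCost (w : List (ι × Bool)) : WithBot ι ×ₗ ℕ :=
  toLex ((w.map Prod.fst).maximum, w.length)

lemma maximum_le_of_wordCost_le {w w' : List (ι × Bool)} (h : wordCost w ≤ wordCost w') :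
    (w.map Prod.fst).maximum ≤ (w'.map Prod.fst).maximum :=
  Prod.Lex.monotone_fst _ _ h

lemma maximum_le_maximum_cons (l : ι × Bool) (w : List (ι × Bool)) :
    (w.map Prod.fst).maximum ≤ ((l :: w).map Prod.fst).maximum := by
  rw [List.map_cons, List.maximum_cons]
  exact le_max_right _ _

lemma wordCost_lt_cons (l : ι × Bool) (w : List (ι × Bool)) : wordCost w < wordCost (l :: w) :=
  Prod.Lex.toLex_lt_toLex'.2 ⟨maximum_le_maximum_cons l w, fun _ => Nat.lt_succ_self _⟩

variable [WellFoundedLT ι] [MulAction.IsPretransitive (FreeGroup ι) V]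

/-- A word of minimal cost among those carrying `v₀` to `v`. -/
noncomputable def minWord (v₀ v : V) : List (ι × Bool) :=
  Function.argminOn wordCost {w | FreeGroup.mk w • v₀ = v} (exists_mk_smul_eq v₀ v)

lemma mk_minWord_smul (v₀ v : V) : FreeGroup.mk (minWord (ι := ι) v₀ v) • v₀ = v :=
  Function.argminOn_mem wordCost {w | FreeGroup.mk w • v₀ = v} (exists_mk_smul_eq v₀ v)

lemma wordCost_minWord_le (v₀ : V) (w : List (ι × Bool)) :
    wordCost (minWord v₀ (FreeGroup.mk w • v₀)) ≤ wordCost w :=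
  Function.argminOn_le wordCost {w' | FreeGroup.mk w' • v₀ = FreeGroup.mk w • v₀} rfl

/-- The Schreier transversal obtained by following the first letters of the words `minWord`.
Minimal words themselves need not be closed under suffixes, as they involve a choice. -/
noncomputable def schreierWord (v₀ v : V) : List (ι × Bool) :=
  match _ : minWord v₀ v with
  | [] => []
  | l :: w => l :: schreierWord v₀ (FreeGroup.mk w • v₀)
termination_by wordCost (minWord (ι := ι) v₀ v)
decreasing_by
  exact ‹minWord v₀ v = l :: w› ▸ (wordCost_minWord_le v₀ w).trans_lt (wordCost_lt_cons l w)

lemma mk_schreierWord_smul (v₀ v : V) : FreeGroup.mk (schreierWord (ι := ι) v₀ v) • v₀ = v := by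
  fun_induction schreierWord (ι := ι) v₀ v with
  | case1 v h => rw [← h, mk_minWord_smul]
  | case2 v l w h ih => rw [mk_cons_smul, ih, ← mk_cons_smul, ← h, mk_minWord_smul]

lemma schreierWord_mk_smul_of_suffix {v₀ v : V} {u : List (ι × Bool)}
    (hu : u <:+ schreierWord v₀ v) : schreierWord v₀ (FreeGroup.mk u • v₀) = u := by
  by_cases h : u = schreierWord v₀ v
  · rw [h, mk_schreierWord_smul]
  · fun_induction schreierWord (ι := ι) v₀ v with
    | case1 => exact absurd (List.suffix_nil.1 hu) h
    | case2 _ l w _ ih =>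
      have hu' := (List.suffix_cons_iff.1 hu).resolve_left h
      by_cases h' : u = schreierWord v₀ (FreeGroup.mk w • v₀)
      · rw [h', mk_schreierWord_smul]
      · exact ih hu' h'

lemma le_maximum_minWord_of_mem_schreierWord (v₀ v : V) :
    ∀ l ∈ schreierWord (ι := ι) v₀ v,
      (l.1 : WithBot ι) ≤ ((minWord v₀ v).map Prod.fst).maximum := by
  fun_induction schreierWord (ι := ι) v₀ v with
  | case1 => simp
  | case2 v l w h ih =>
    rw [h, List.forall_mem_cons]
    refine ⟨List.le_maximum_of_mem' (by simp), fun m hm => ?_⟩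
    calc (m.1 : WithBot ι)
        ≤ ((minWord v₀ (FreeGroup.mk w • v₀)).map Prod.fst).maximum := ih m hm
      _ ≤ (w.map Prod.fst).maximum := maximum_le_of_wordCost_le (wordCost_minWord_le v₀ w)
      _ ≤ ((l :: w).map Prod.fst).maximum := maximum_le_maximum_cons l w

lemma exists_le_of_mem_schreierWord {v₀ : V} {w : List (ι × Bool)} {l : ι × Bool}
    (hl : l ∈ schreierWord v₀ (FreeGroup.mk w • v₀)) : ∃ m ∈ w, l.1 ≤ m.1 := by
  have le_max : (l.1 : WithBot ι) ≤ (w.map Prod.fst).maximum :=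
    (le_maximum_minWord_of_mem_schreierWord _ _ l hl).trans
      (maximum_le_of_wordCost_le (wordCost_minWord_le v₀ w))
  obtain ⟨i, hi, hli⟩ := WithBot.coe_le_iff.1 le_max
  obtain ⟨m, hm, rfl⟩ := List.mem_map.1 (List.maximum_mem hi)
  exact ⟨m, hm, hli⟩

lemma isSchreierTransversal_schreierWord (v₀ : V) :
    IsSchreierTransversal v₀ (schreierWord (ι := ι) v₀) where
  mk_smul := mk_schreierWord_smul v₀
  suffix_closed := schreierWord_mk_smul_of_suffix
  exists_letter_le _ _ := exists_le_of_mem_schreierWord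

end Existence

end SchreierTransversal

section SkewAction

variable {ι V K : Type*} [MulAction (FreeGroup ι) V] [Group K]

/-- The action of a free group on `V × K` lifting its action on `V`, in which the generator `i`
carries the fibre over `v` to the fibre over `i • v` by left multiplication by `c i v`: the
covering of the Schreier graph of `V` defined by the edge labels `c`. -/
def skewAction (c : ι → V → K) : FreeGroup ι →* Equiv.Perm (V × K) :=
  FreeGroup.lift fun i =>
    (MulAction.toPerm (FreeGroup.of i)).prodShear fun v => Equiv.mulLeft (c i v)

lemma skewAction_of_apply (c : ι → V → K) (i : ι) (v : V) (k : K) :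
    skewAction c (FreeGroup.of i) (v, k) = (FreeGroup.of i • v, c i v * k) := by
  simp [skewAction, Equiv.prodShear]

/-- Tree edges carry the trivial label, so the tree lifts to each sheet of the covering. -/
lemma IsSchreierTransversal.skewAction_mk_apply [LE ι] {v₀ : V} {t : V → List (ι × Bool)}
    (ht : IsSchreierTransversal v₀ t) {c : ι → V → K}
    (hc : ∀ i v, schreierGen (fun v => FreeGroup.mk (t v)) (FreeGroup.of i) v = 1 → c i v = 1)
    (v : V) (k : K) : skewAction c (FreeGroup.mk (t v)) (v₀, k) = (v, k) := by
  suffices ∀ u, t (FreeGroup.mk u • v₀) = u →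
      skewAction c (FreeGroup.mk u) (v₀, k) = (FreeGroup.mk u • v₀, k) by
    simpa only [ht.mk_smul] using this (t v) (by rw [ht.mk_smul])
  intro u hu
  induction u with
  | nil => simp [← FreeGroup.one_eq_mk]
  | cons l u ih =>
    have hu' : t (FreeGroup.mk u • v₀) = u :=
      ht.suffix_closed (hu.symm ▸ List.suffix_cons l u)
    have mk_cons : FreeGroup.mk (l :: u) = FreeGroup.mk [l] * FreeGroup.mk u := by
      rw [FreeGroup.mul_mk, List.singleton_append]
    rw [mk_cons, map_mul, Equiv.Perm.mul_apply, ih hu', mul_smul]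
    rw [mk_cons_smul] at hu
    obtain ⟨i, b⟩ := l
    cases b with
    | true =>
      have label_eq_one : c i (FreeGroup.mk u • v₀) = 1 := by
        refine hc _ _ (schreierGen_eq_one_iff.2 ?_)
        rw [hu']
        exact (congrArg FreeGroup.mk hu).trans mk_cons
      exact (skewAction_of_apply c i _ k).trans (by rw [label_eq_one, one_mul]; rfl)
    | false =>
      change t ((FreeGroup.of i)⁻¹ • FreeGroup.mk u • v₀) = _ at hu
      have label_eq_one : c i ((FreeGroup.of i)⁻¹ • FreeGroup.mk u • v₀) = 1 := by
        refine hc _ _ (schreierGen_eq_one_iff.2 ?_)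
        rw [smul_inv_smul, hu', hu, mk_cons]
        exact (mul_inv_cancel_left (FreeGroup.of i) _).symm
      change skewAction c (FreeGroup.of i)⁻¹ _ = ((FreeGroup.of i)⁻¹ • _, k)
      rw [map_inv, Equiv.Perm.inv_eq_iff_eq, skewAction_of_apply, label_eq_one, one_mul,
        smul_inv_smul]

end SkewAction

section SchreierBasis

variable {ι V : Type*} [MulAction (FreeGroup ι) V]

/-- The edges of the Schreier graph of `V` outside the tree traced by `t`; the edge `(i, v)` runs
from `v` to `i • v`. -/
def nontreeEdges (t : V → FreeGroup ι) : Set (ι × V) :=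
  {e | schreierGen t (FreeGroup.of e.1) e.2 ≠ 1}

/-- The Schreier generators of the edges outside the tree traced by `t`. -/
def schreierBasis (t : V → FreeGroup ι) : Set (FreeGroup ι) :=
  Set.range fun e : nontreeEdges t => schreierGen t (FreeGroup.of e.1.1) e.1.2

lemma schreierGen_mem_schreierBasis {t : V → FreeGroup ι} {i : ι} {v : V}
    (h : schreierGen t (FreeGroup.of i) v ≠ 1) :
    schreierGen t (FreeGroup.of i) v ∈ schreierBasis t :=
  ⟨⟨(i, v), h⟩, rfl⟩

open Classical in
/-- The label of an edge of the Schreier graph: a free generator of its own for an edge outside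
the tree, trivial for an edge in the tree. -/
noncomputable def edgeLabel (t : V → FreeGroup ι) (i : ι) (v : V) : FreeGroup (nontreeEdges t) :=
  if h : (i, v) ∈ nontreeEdges t then FreeGroup.of ⟨(i, v), h⟩ else 1

variable [LE ι] {v₀ : V} {t : V → List (ι × Bool)}

lemma IsSchreierTransversal.skewAction_schreierGen_apply (ht : IsSchreierTransversal v₀ t)
    (e : nontreeEdges fun v => FreeGroup.mk (t v)) (k : FreeGroup _) :
    skewAction (edgeLabel fun v => FreeGroup.mk (t v))
      (schreierGen (fun v => FreeGroup.mk (t v)) (FreeGroup.of e.1.1) e.1.2) (v₀, k) =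
      (v₀, FreeGroup.of e * k) := by
  have tree_apply := ht.skewAction_mk_apply (c := edgeLabel fun v => FreeGroup.mk (t v))
    fun i v h => dif_neg (not_not.2 h)
  have label_eq : edgeLabel (fun v => FreeGroup.mk (t v)) e.1.1 e.1.2 = FreeGroup.of e :=
    dif_pos e.2
  rw [schreierGen, map_mul, map_mul, map_inv, Equiv.Perm.mul_apply, Equiv.Perm.mul_apply,
    tree_apply, skewAction_of_apply, label_eq, Equiv.Perm.inv_eq_iff_eq, tree_apply]

lemma IsSchreierTransversal.isFreeFamily_schreierBasis (ht : IsSchreierTransversal v₀ t) :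
    IsFreeFamily ((↑) : schreierBasis (fun v => FreeGroup.mk (t v)) → FreeGroup ι) := by
  refine IsFreeFamily.coe_range fun k k' h => ?_
  have skewAction_lift_apply (k m : FreeGroup (nontreeEdges fun v => FreeGroup.mk (t v))) :
      skewAction (edgeLabel fun v => FreeGroup.mk (t v))
        (FreeGroup.lift (fun e : nontreeEdges fun v => FreeGroup.mk (t v) =>
          schreierGen (fun v => FreeGroup.mk (t v)) (FreeGroup.of e.1.1) e.1.2) k) (v₀, m) =
        (v₀, k * m) := by
    induction k using FreeGroup.induction_on generalizing m with
    | C1 => simp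
    | of e => rw [FreeGroup.lift_apply_of, ht.skewAction_schreierGen_apply]
    | inv_of e _ =>
      rw [map_inv, FreeGroup.lift_apply_of, map_inv, Equiv.Perm.inv_eq_iff_eq,
        ht.skewAction_schreierGen_apply, mul_inv_cancel_left]
    | mul k l ihk ihl =>
      rw [map_mul, map_mul, Equiv.Perm.mul_apply, ihl, ihk, mul_assoc]
  simpa [h, skewAction_lift_apply k'] using (skewAction_lift_apply k 1).symm

lemma IsSchreierTransversal.mk_mem_closure_of_mem_orbit (ht : IsSchreierTransversal v₀ t)
    {Y : Set ι} (hY : IsLowerSet Y) {v : V}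
    (hv : v ∈ MulAction.orbit (Subgroup.closure (FreeGroup.of '' Y)) v₀) :
    FreeGroup.mk (t v) ∈ Subgroup.closure (FreeGroup.of '' Y) := by
  obtain ⟨⟨g, hg⟩, rfl⟩ := hv
  obtain ⟨w, hw, rfl⟩ := exists_mk_eq_of_mem_closure_of_image hg
  refine mk_mem_closure_of_image fun l hl => ?_
  obtain ⟨m, hm, hlm⟩ := ht.exists_letter_le w l hl
  exact hY hlm (hw m hm)

lemma IsSchreierTransversal.closure_schreierBasis_inter (ht : IsSchreierTransversal v₀ t)
    {Y : Set ι} (hY : IsLowerSet Y) :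
    Subgroup.closure (schreierBasis (fun v => FreeGroup.mk (t v)) ∩
      Subgroup.closure (FreeGroup.of '' Y)) =
      MulAction.stabilizer (FreeGroup ι) v₀ ⊓ Subgroup.closure (FreeGroup.of '' Y) := by
  set T : V → FreeGroup ι := fun v => FreeGroup.mk (t v) with hT
  set A := Subgroup.closure (FreeGroup.of '' Y)
  apply le_antisymm
  · refine (Subgroup.closure_le _).2 (Set.inter_subset_inter_left _ ?_)
    rintro _ ⟨e, rfl⟩
    exact schreierGen_mem_stabilizer ht.mk_smul _ _
  · rintro g ⟨hgv₀, hg⟩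
    have gen_mem : ∀ a ∈ FreeGroup.of '' Y, ∀ v ∈ MulAction.orbit A v₀,
        schreierGen T a v ∈ Subgroup.closure (schreierBasis T ∩ A) := by
      rintro _ ⟨i, hi, rfl⟩ v hv
      have hiA : FreeGroup.of i ∈ A := Subgroup.subset_closure ⟨i, hi, rfl⟩
      by_cases h : schreierGen T (FreeGroup.of i) v = 1
      · exact h ▸ one_mem _
      · refine Subgroup.subset_closure ⟨schreierGen_mem_schreierBasis h, ?_⟩
        refine mul_mem (inv_mem (ht.mk_mem_closure_of_mem_orbit hY ?_))
          (mul_mem hiA (ht.mk_mem_closure_of_mem_orbit hY hv))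
        exact MulAction.mem_orbit_of_mem_orbit (⟨_, hiA⟩ : A) hv
    have T_v₀ : T v₀ = 1 := by
      have := ht.suffix_closed (List.nil_suffix (l := t v₀))
      rw [← FreeGroup.one_eq_mk, one_smul] at this
      rw [hT, FreeGroup.one_eq_mk, ← this]
    have := schreierGen_mem_of_mem_closure gen_mem hg v₀ (MulAction.mem_orbit_self v₀)
    rwa [schreierGen, MulAction.mem_stabilizer_iff.1 hgv₀, T_v₀, inv_one, one_mul,
      mul_one] at this

end SchreierBasis

section AdaptedBasis

variable {ι G : Type*} [Group G]

/-- A free basis `B` of the subgroup `H` is *adapted* to the family `x` if it contains a basis of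
`H ⊓ ⟨x j : j ∈ Y⟩` for every initial segment `Y` of the index type. -/
structure IsAdaptedBasis [LE ι] (x : ι → G) (H : Subgroup G) (B : Set G) : Prop where
  isFreeFamily : IsFreeFamily ((↑) : B → G)
  closure_eq : Subgroup.closure B = H
  closure_inter : ∀ Y, IsLowerSet Y →
    Subgroup.closure (B ∩ Subgroup.closure (x '' Y)) = H ⊓ Subgroup.closure (x '' Y)

lemma IsSchreierTransversal.isAdaptedBasis {V : Type*} [MulAction (FreeGroup ι) V] [LE ι] {v₀ : V}
    {t : V → List (ι × Bool)} (ht : IsSchreierTransversal v₀ t) :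
    IsAdaptedBasis FreeGroup.of (MulAction.stabilizer (FreeGroup ι) v₀)
      (schreierBasis fun v => FreeGroup.mk (t v)) where
  isFreeFamily := ht.isFreeFamily_schreierBasis
  closure_eq := by
    simpa [FreeGroup.closure_range_of] using ht.closure_schreierBasis_inter isLowerSet_univ
  closure_inter _ := ht.closure_schreierBasis_inter

lemma IsAdaptedBasis.image [LE ι] {K : Type*} [Group K] {x : ι → G} {H : Subgroup G} {B : Set G}
    (hB : IsAdaptedBasis x H B) {φ : G →* K} (hφ : Function.Injective φ) :
    IsAdaptedBasis (φ ∘ x) (H.map φ) (φ '' B) where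
  isFreeFamily := hB.isFreeFamily.coe_image hφ
  closure_eq := by rw [← MonoidHom.map_closure, hB.closure_eq]
  closure_inter Y hY := by
    rw [Set.image_comp, ← MonoidHom.map_closure, Subgroup.coe_map, ← Set.image_inter hφ,
      ← MonoidHom.map_closure, hB.closure_inter Y hY, Subgroup.map_inf_eq _ _ _ hφ]

theorem IsFreeFamily.exists_isAdaptedBasis [LinearOrder ι] [WellFoundedLT ι] {x : ι → G}
    (hx : IsFreeFamily x) {H : Subgroup G} (hH : H ≤ Subgroup.closure (Set.range x)) :
    ∃ B, IsAdaptedBasis x H B := by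
  let L := H.comap (FreeGroup.lift x)
  have hB := (isSchreierTransversal_schreierWord (ι := ι)
    ((1 : FreeGroup ι) : FreeGroup ι ⧸ L)).isAdaptedBasis
  have lift_comp_of : FreeGroup.lift x ∘ FreeGroup.of = x := funext fun i => by simp
  have map_L : L.map (FreeGroup.lift x) = H := by
    rw [Subgroup.map_comap_eq, FreeGroup.range_lift_eq_closure, inf_eq_right.2 hH]
  rw [MulAction.stabilizer_quotient] at hB
  exact ⟨_, lift_comp_of ▸ map_L ▸ hB.image hx⟩

end AdaptedBasis

section Layers

variable {G : Type u} [Group G] {n : ℕ} {x : Fin n → G} {H : Subgroup G} {B : Set G}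

/-- The `i`-th layer `F_{i+1} ∖ F_i` of the flag of subgroups `F_i = stage x i`. -/
def layer (x : Fin n → G) (i : ℕ) : Set G :=
  stage x (i + 1) \ stage x i

lemma stage_mono (x : Fin n → G) : Monotone (stage x) :=
  fun _ _ h => Subgroup.closure_mono (Set.image_mono fun _ hj => lt_of_lt_of_le hj h)

lemma stage_zero (x : Fin n → G) : stage x 0 = ⊥ := by
  simp [stage]

lemma stage_eq_closure_range (x : Fin n → G) : stage x n = Subgroup.closure (Set.range x) := by
  simp [stage]

lemma exists_mem_layer {g : G} (hg : g ∈ Subgroup.closure (Set.range x)) (hg₁ : g ≠ 1) :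
    ∃ i : Fin n, g ∈ layer x i := by
  classical
  have mem_stage_n : g ∈ stage x n := stage_eq_closure_range x ▸ hg
  have h : ∃ i, g ∈ stage x i := ⟨n, mem_stage_n⟩
  have find_ne_zero : Nat.find h ≠ 0 := by
    simpa [stage_zero] using hg₁
  obtain ⟨i, hi⟩ := Nat.exists_eq_succ_of_ne_zero find_ne_zero
  have find_le : Nat.find h ≤ n := Nat.find_min' h mem_stage_n
  exact ⟨⟨i, by lia⟩, hi ▸ Nat.find_spec h, Nat.find_min h (by lia)⟩

lemma eq_of_mem_layer {g : G} {i j : ℕ} (hi : g ∈ layer x i) (hj : g ∈ layer x j) : i = j :=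
  le_antisymm (not_lt.1 fun h => hi.2 (stage_mono x h hj.1))
    (not_lt.1 fun h => hj.2 (stage_mono x h hi.1))

lemma IsAdaptedBasis.closure_inter_stage (hB : IsAdaptedBasis x H B) (i : ℕ) :
    Subgroup.closure (B ∩ stage x i) = H ⊓ stage x i :=
  hB.closure_inter _ fun _ _ hkj hj => (Fin.le_def.1 hkj).trans_lt hj

lemma IsAdaptedBasis.rk_inf_stage (hB : IsAdaptedBasis x H B) (i : ℕ) :
    rk (H ⊓ stage x i) = #(B ∩ stage x i : Set G) := by
  rw [← hB.closure_inter_stage, (hB.isFreeFamily.mono Set.inter_subset_left).rk_closure]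

lemma inter_stage_union_inter_layer (B : Set G) (x : Fin n → G) (i : ℕ) :
    (B ∩ stage x i) ∪ (B ∩ layer x i) = B ∩ stage x (i + 1) := by
  rw [← Set.inter_union_distrib_left, layer, Set.union_sdiff_cancel (stage_mono x i.le_succ)]

lemma IsAdaptedBasis.rk_inf_stage_succ (hB : IsAdaptedBasis x H B) (i : ℕ) :
    rk (H ⊓ stage x (i + 1)) = rk (H ⊓ stage x i) + #(B ∩ layer x i : Set G) := by
  have disjoint : Disjoint (B ∩ stage x i : Set G) (B ∩ layer x i) :=
    Set.disjoint_sdiff_right.mono Set.inter_subset_right Set.inter_subset_right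
  rw [hB.rk_inf_stage, hB.rk_inf_stage, ← inter_stage_union_inter_layer,
    mk_union_of_disjoint disjoint]

lemma IsAdaptedBasis.inter_layer_nonempty (hB : IsAdaptedBasis x H B) {i : ℕ}
    (h : ((H : Set G) ∩ layer x i).Nonempty) : (B ∩ layer x i).Nonempty := by
  rw [Set.nonempty_iff_ne_empty]
  intro inter_layer_eq_empty
  obtain ⟨g, hgH, hg, hg'⟩ := h
  have inf_stage_eq : H ⊓ stage x (i + 1) = H ⊓ stage x i := by
    rw [← hB.closure_inter_stage, ← inter_stage_union_inter_layer, inter_layer_eq_empty,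
      Set.union_empty, hB.closure_inter_stage]
  exact hg' (inf_stage_eq.le ⟨hgH, hg⟩).2

lemma InEchelonForm.rk_inf_stage_lt_aleph0 (hH : InEchelonForm x H) {i : ℕ} (hi : i ≤ n) :
    rk (H ⊓ stage x i) < ℵ₀ := by
  induction i with
  | zero =>
    rw [stage_zero, inf_bot_eq, ← Subgroup.closure_empty]
    exact (rk_closure_le ∅).trans_lt (by simp [aleph0_pos])
  | succ i ih =>
    exact (hH i hi).trans_lt (add_lt_aleph0 (ih (Nat.le_of_succ_le hi)) one_lt_aleph0)

lemma IsAdaptedBasis.inEchelonForm_iff (hB : IsAdaptedBasis x H B) :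
    InEchelonForm x H ↔ ∀ i < n, (B ∩ layer x i).Subsingleton := by
  simp only [← mk_le_one_iff_set_subsingleton]
  constructor
  · intro h i hi
    have := h i hi
    rwa [hB.rk_inf_stage_succ, add_comm, add_comm _ 1,
      add_le_add_iff_of_lt_aleph0 (h.rk_inf_stage_lt_aleph0 hi.le)] at this
  · intro h i hi
    rw [hB.rk_inf_stage_succ]
    gcongr
    exact h i hi

lemma IsAdaptedBasis.inEchelonForm_iff_injective (hB : IsAdaptedBasis x H B) {ind : B → Fin n}
    (hind : ∀ b : B, (b : G) ∈ layer x (ind b)) :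
    InEchelonForm x H ↔ Function.Injective ind := by
  rw [hB.inEchelonForm_iff]
  constructor
  · intro h b c hbc
    exact Subtype.ext (h _ (ind b).isLt ⟨b.2, hind b⟩ ⟨c.2, hbc ▸ hind c⟩)
  · rintro h i - b ⟨hb, hbi⟩ c ⟨hc, hci⟩
    refine congrArg Subtype.val (h (a₁ := ⟨b, hb⟩) (a₂ := ⟨c, hc⟩) (Fin.ext ?_))
    exact (eq_of_mem_layer (hind _) hbi).trans (eq_of_mem_layer hci (hind ⟨c, hc⟩))

lemma IsAdaptedBasis.exists_index (hB : IsAdaptedBasis x H B)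
    (hH : H ≤ Subgroup.closure (Set.range x)) :
    ∃ ind : B → Fin n, ∀ b : B, (b : G) ∈ layer x (ind b) :=
  Classical.skolem.1 fun b => exists_mem_layer
    (hH (hB.closure_eq ▸ Subgroup.subset_closure b.2)) (hB.isFreeFamily.ne_one b)

end Layers

section EchelonBasis

lemma exists_equiv_fin_strictMono {α β : Type*} [Finite α] [LinearOrder β] {f : α → β}
    (hf : Function.Injective f) : ∃ (r : ℕ) (e : Fin r ≃ α), StrictMono (f ∘ e) := by
  let _ := Fintype.ofFinite α
  let _ : LinearOrder α := LinearOrder.lift' f hf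
  exact ⟨_, (Fintype.orderIsoFinOfCardEq α rfl).toEquiv, fun _ _ h =>
    (Fintype.orderIsoFinOfCardEq α rfl).strictMono h⟩

variable {G : Type*} [Group G]

lemma IsFreeFamily.nonempty_equiv {ι : Type*} {B : Set G} (hB : IsFreeFamily ((↑) : B → G))
    {y : ι → G} (hy : IsFreeFamily y)
    (h : Subgroup.closure B = Subgroup.closure (Set.range y)) : Nonempty (B ≃ ι) := by
  have mk_eq : #B = #(Set.range y) := by rw [← hB.rk_closure, h, hy.coe_range.rk_closure]
  obtain ⟨e⟩ := Cardinal.eq.1 mk_eq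
  exact ⟨e.trans (Equiv.ofInjective y hy.injective).symm⟩

variable {n : ℕ} {x : Fin n → G} {H : Subgroup G} {B : Set G}

lemma IsAdaptedBasis.inEchelonForm_of_basis (hB : IsAdaptedBasis x H B) {ind : B → Fin n}
    (hind : ∀ b : B, (b : G) ∈ layer x (ind b)) {r : ℕ} {idx : Fin r → Fin n}
    (hidx : Function.Injective idx) {y : Fin r → G} (hy_layer : ∀ j, y j ∈ layer x (idx j))
    (hy : IsFreeFamily y) (hyH : Subgroup.closure (Set.range y) = H) : InEchelonForm x H := by
  have y_mem (j : Fin r) : y j ∈ H := hyH ▸ Subgroup.subset_closure ⟨j, rfl⟩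
  choose b hbB hb using fun j => hB.inter_layer_nonempty ⟨y j, y_mem j, hy_layer j⟩
  let b' (j : Fin r) : B := ⟨b j, hbB j⟩
  have ind_comp : ind ∘ b' = idx := funext fun j => Fin.ext (eq_of_mem_layer (hind (b' j)) (hb j))
  have ind_comp_injective : Function.Injective (ind ∘ b') := ind_comp ▸ hidx
  obtain ⟨e⟩ := hB.isFreeFamily.nonempty_equiv hy (hB.closure_eq.trans hyH.symm)
  have b_surjective : Function.Surjective b' := by
    have := Finite.surjective_of_injective
      (e.injective.comp ind_comp_injective.of_comp)
    exact (Equiv.comp_surjective _ e).1 this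
  exact (hB.inEchelonForm_iff_injective hind).2 (ind_comp_injective.of_comp_right b_surjective)

lemma IsAdaptedBasis.exists_basis (hB : IsAdaptedBasis x H B) {ind : B → Fin n}
    (hind : ∀ b : B, (b : G) ∈ layer x (ind b)) (hH : InEchelonForm x H) :
    ∃ (r : ℕ) (idx : Fin r → Fin n) (y : Fin r → G), StrictMono idx ∧
      (∀ j, y j ∈ layer x (idx j)) ∧ IsFreeFamily y ∧ Subgroup.closure (Set.range y) = H := by
  have ind_injective := (hB.inEchelonForm_iff_injective hind).1 hH
  have := Finite.of_injective ind ind_injective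
  obtain ⟨r, e, he⟩ := exists_equiv_fin_strictMono ind_injective
  refine ⟨r, ind ∘ e, (↑) ∘ e, he, fun j => hind (e j), hB.isFreeFamily.comp e.injective, ?_⟩
  rw [e.surjective.range_comp, Subtype.range_coe, hB.closure_eq]

end EchelonBasis

theorem inEchelonForm_iff_basis_general {G : Type*} [Group G] (n : ℕ) (x : Fin n → G)
    (hx : IsFreeFamily x) (H : Subgroup G) (hH : H ≤ Subgroup.closure (Set.range x)) :
    InEchelonForm x H ↔
      ∃ (r : ℕ) (idx : Fin r → Fin n) (y : Fin r → G),
        StrictMono idx ∧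
        (∀ j, y j ∈ stage x ((idx j : ℕ) + 1) ∧ y j ∉ stage x (idx j : ℕ)) ∧
        Function.Injective (FreeGroup.lift y) ∧ (FreeGroup.lift y).range = H := by
  obtain ⟨B, hB⟩ := hx.exists_isAdaptedBasis hH
  obtain ⟨ind, hind⟩ := hB.exists_index hH
  simp only [FreeGroup.range_lift_eq_closure]
  constructor
  · exact hB.exists_basis hind
  · rintro ⟨r, idx, y, hidx, hy_layer, hy, hyH⟩
    exact hB.inEchelonForm_of_basis hind hidx.injective hy_layer hy hyH

/-- `H ≤ F_n` is in echelon form with respect to an ordered basis `x` iff `H` has a free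
ordered basis `y_{i_1}, …, y_{i_r}` with `y_{i_j} ∈ F_{i_j} − F_{i_j − 1}` and
`i_1 < i_2 < ⋯ < i_r`. -/
theorem inEchelonForm_iff_basis (n : ℕ) (x : Fin n → FreeGroup (Fin n))
    (hx : IsOrderedBasis x) (H : Subgroup (FreeGroup (Fin n))) :
    InEchelonForm x H ↔
      ∃ (r : ℕ) (idx : Fin r → Fin n) (y : Fin r → FreeGroup (Fin n)),
        StrictMono idx ∧
        (∀ j, y j ∈ stage x ((idx j : ℕ) + 1) ∧ y j ∉ stage x (idx j : ℕ)) ∧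
        Function.Injective (FreeGroup.lift y) ∧ (FreeGroup.lift y).range = H :=
  inEchelonForm_iff_basis_general n x hx.injective H <| by
    rw [← FreeGroup.range_lift_eq_closure, MonoidHom.range_eq_top.2 hx.surjective]
    exact le_top
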